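/- arXiv:2505.17523 — 3 statements merged into one kernel-verified Lean document; each statement's English description precedes it below -/
import Mathlib

section
/- For every subset T ⊆ 𝔹, the cones 𝒟′_T and 𝒟_T coincide: 𝒟′_T = 𝒟_T. -/
/- Setting: `B` is the finite nonempty set 𝔹 equipped with a permutation `σ` (Frobenius),
and `p` is a prime.  Weights live in `ℚ^𝔹 = (B → ℚ)`.  The orbits `𝔹_𝔭` of `σ` are the sets
`orbit σ β`, and for `T ⊆ 𝔹` we have `T_𝔭 = T ∩ orbit σ β`. -/

open scoped Classical

noncomputable section

namespace GO

variable {B : Type*} [Fintype B] [DecidableEq B]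

/-- The standard basis vector `e_β` of `ℚ^𝔹`. -/
def e (β : B) : B → ℚ := fun τ => if τ = β then 1 else 0

/-- `β'` lies in the `σ`-orbit of `β`. -/
def sameOrbit (σ : Equiv.Perm B) (β β' : B) : Prop := ∃ n : ℕ, (σ ^ n) β = β'

/-- The `σ`-orbit `𝔹_𝔭` of `β`. -/
def orbit (σ : Equiv.Perm B) (β : B) : Set B := {τ | sameOrbit σ β τ}

/-- `|𝔹_𝔭|`, the cardinality of the orbit of `β`. -/
def orbitCard (σ : Equiv.Perm B) (β : B) : ℕ := (orbit σ β).ncard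

/-- For `β`, `β'` in the same orbit: the unique `n` with `0 < n ≤ |𝔹_𝔭|` and `σ^n β' = β`,
realized as the least positive `n` with `σ^n β' = β`. -/
def steps (σ : Equiv.Perm B) (β' β : B) : ℕ := sInf {n : ℕ | 0 < n ∧ (σ ^ n) β' = β}

/-- For `β`, `β'` in the same orbit: the unique `n` with `0 ≤ n < |𝔹_𝔭|` and `σ^n β = β'`. -/
def steps0 (σ : Equiv.Perm B) (β β' : B) : ℕ := sInf {n : ℕ | (σ ^ n) β = β'}

/-- `h_β^{β'} = -e_β + p^n e_{β'}` where `β = σ^n β'` with `0 < n ≤ |𝔹_𝔭|`. -/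
def hvec (σ : Equiv.Perm B) (p : ℕ) (β β' : B) : B → ℚ :=
  -(e β) + ((p : ℚ) ^ steps σ β' β) • e β'

/-- `b_β^{β'} = e_β + p^n e_{β'}` where `β = σ^n β'` with `0 < n ≤ |𝔹_𝔭|`. -/
def bvec (σ : Equiv.Perm B) (p : ℕ) (β β' : B) : B → ℚ :=
  (e β) + ((p : ℚ) ^ steps σ β' β) • e β'

/-- `h_β = -e_β + p e_{σ⁻¹ β}`. -/
def hsimple (σ : Equiv.Perm B) (p : ℕ) (β : B) : B → ℚ := -(e β) + (p : ℚ) • e (σ⁻¹ β)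

/-- `b_β = e_β + p e_{σ⁻¹ β}`. -/
def bsimple (σ : Equiv.Perm B) (p : ℕ) (β : B) : B → ℚ := (e β) + (p : ℚ) • e (σ⁻¹ β)

/-- The `ℚ^{≥0}`-cone generated by a set `S` of vectors: all finite nonnegative rational
linear combinations of elements of `S`. -/
def cone {V : Type*} [AddCommMonoid V] [Module ℚ V] (S : Set V) : Set V :=
  {x | ∃ (n : ℕ) (c : Fin n → ℚ) (v : Fin n → V),
    (∀ i, 0 ≤ c i) ∧ (∀ i, v i ∈ S) ∧ x = ∑ i, c i • v i}

/-- A chain in `T` (automatically contained in a single orbit, so this is the notion of a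
chain in `T_𝔭` for `T_𝔭 ⊊ 𝔹_𝔭`): `C = {σ^{-i}β : 0 ≤ i ≤ m} ⊆ T` with `σβ ∉ T` and
`σ^{-m-1}β ∉ T`. -/
def IsChainIn (σ : Equiv.Perm B) (T : Set B) (C : Set B) : Prop :=
  ∃ (β : B) (m : ℕ), σ β ∉ T ∧ (σ⁻¹ ^ (m + 1)) β ∉ T ∧
    (∀ i ≤ m, (σ⁻¹ ^ i) β ∈ T) ∧ C = {τ | ∃ i ≤ m, τ = (σ⁻¹ ^ i) β}

/-- `C̃` for a chain `C`: equals `C` if `m` is odd (i.e. `|C| = m+1` is even), and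
`C ∪ {σ^{-m-1}β} = C ∪ σ⁻¹(C)` if `m` is even (i.e. `|C|` odd). -/
def chainExt (σ : Equiv.Perm B) (C : Set B) : Set B :=
  if Odd C.ncard then C ∪ (⇑σ⁻¹ '' C) else C

/-- `T̃ = ⋃_𝔭 T̃_𝔭`: the union of `T` with the extensions `C̃` of all chains `C` in `T`.
(For orbits with `T_𝔭 = 𝔹_𝔭` there are no chains and `T̃_𝔭 = 𝔹_𝔭 = T_𝔭`.) -/
def tilde (σ : Equiv.Perm B) (T : Set B) : Set B :=
  T ∪ ⋃ (C : Set B) (_ : IsChainIn σ T C), chainExt σ C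

/-- `μ_β`: the least `i > 0` with `σ^i β ∉ T` if `T_𝔭 ≠ 𝔹_𝔭`, and `0` if `T_𝔭 = 𝔹_𝔭`. -/
def mu (σ : Equiv.Perm B) (T : Set B) (β : B) : ℕ :=
  if orbit σ β ⊆ T then 0 else sInf {i : ℕ | 0 < i ∧ (σ ^ i) β ∉ T}

/-- `n_β`: the least `i > 0` with `σ^i β ∉ T̃` (meaningful when `T̃_𝔭 ≠ 𝔹_𝔭`). -/
def nn (σ : Equiv.Perm B) (T : Set B) (β : B) : ℕ :=
  sInf {i : ℕ | 0 < i ∧ (σ ^ i) β ∉ tilde σ T}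

/-- `ν_β`: the least `i ≥ 0` with `σ^{-i} β ∉ T` (meaningful when `T_𝔭 ≠ 𝔹_𝔭`). -/
def nu (σ : Equiv.Perm B) (T : Set B) (β : B) : ℕ :=
  sInf {i : ℕ | (σ⁻¹ ^ i) β ∉ T}

/-- `𝒯(T_𝔭) = (𝔹_𝔭 − T̃_𝔭) ∪ σ(T̃_𝔭 − T_𝔭)`, taken globally (union over all `𝔭`). -/
def Tscr (σ : Equiv.Perm B) (T : Set B) : Set B :=
  (tilde σ T)ᶜ ∪ (⇑σ '' (tilde σ T \ T))

/-- The generating set `⋃_𝔭 𝒢(T_𝔭)`: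
`{h_β^{β'} : β ∈ ℋ(T_𝔭), β' ∈ 𝒯(T_𝔭)} ∪ {±b_β : β ∈ T_𝔭}` over all `𝔭`. -/
def Dgen (σ : Equiv.Perm B) (p : ℕ) (T : Set B) : Set (B → ℚ) :=
  {v | ∃ β β', β ∉ T ∧ β' ∈ Tscr σ T ∧ sameOrbit σ β β' ∧ v = hvec σ p β β'}
  ∪ {v | ∃ β ∈ T, v = bsimple σ p β ∨ v = -(bsimple σ p β)}

/-- The cone `𝒟_T`. -/
def D (σ : Equiv.Perm B) (p : ℕ) (T : Set B) : Set (B → ℚ) := cone (Dgen σ p T)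

/-- `h_{σ^{n_β}β}^{β} = -e_{σ^{n_β}β} + p^{n_β} e_β`. -/
def fH (σ : Equiv.Perm B) (p : ℕ) (T : Set B) (β : B) : B → ℚ :=
  -(e ((σ ^ nn σ T β) β)) + ((p : ℚ) ^ nn σ T β) • e β

/-- `b_{σ^{n_β}β}^{β} = e_{σ^{n_β}β} + p^{n_β} e_β`. -/
def fB (σ : Equiv.Perm B) (p : ℕ) (T : Set B) (β : B) : B → ℚ :=
  (e ((σ ^ nn σ T β) β)) + ((p : ℚ) ^ nn σ T β) • e β

/-- The generating set `⋃_𝔭 𝒢′(T_𝔭)`: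
if `𝔹_𝔭 − T̃_𝔭 ≠ ∅` it is `{h_{σ^{n_β}β}^β : β ∈ 𝔹_𝔭 − T̃_𝔭} ∪ {−b_{σ^{n_β}β}^β : β ∈ T̃_𝔭 − T_𝔭}
∪ {±b_β : β ∈ T_𝔭}`, and if `𝔹_𝔭 = T̃_𝔭` it is `{−e_β : β ∈ 𝔹_𝔭 − T_𝔭} ∪ {±b_β : β ∈ T_𝔭}`. -/
def D'gen (σ : Equiv.Perm B) (p : ℕ) (T : Set B) : Set (B → ℚ) :=
  {v | ∃ β, β ∉ tilde σ T ∧ v = fH σ p T β}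
  ∪ {v | ∃ β, β ∈ tilde σ T ∧ β ∉ T ∧ ¬ orbit σ β ⊆ tilde σ T ∧ v = -(fB σ p T β)}
  ∪ {v | ∃ β, β ∉ T ∧ orbit σ β ⊆ tilde σ T ∧ v = -(e β)}
  ∪ {v | ∃ β ∈ T, v = bsimple σ p β ∨ v = -(bsimple σ p β)}

/-- The cone `𝒟′_T`. -/
def D' (σ : Equiv.Perm B) (p : ℕ) (T : Set B) : Set (B → ℚ) := cone (D'gen σ p T)

/-- `f_β(T)` for `β ∉ T`: `h_{σ^{n_β}β}^β` if `β ∈ 𝔹_𝔭 − T̃_𝔭`; `−b_{σ^{n_β}β}^β` if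
`β ∈ T̃_𝔭 − T_𝔭` and `𝔹_𝔭 ≠ T̃_𝔭`; and `−(1+p^{|𝔹_𝔭|}) e_β` if `𝔹_𝔭 = T̃_𝔭`. -/
def fvec (σ : Equiv.Perm B) (p : ℕ) (T : Set B) (β : B) : B → ℚ :=
  if orbit σ β ⊆ tilde σ T then -((1 + (p : ℚ) ^ orbitCard σ β) • e β)
  else if β ∈ tilde σ T then -(fB σ p T β) else fH σ p T β

/-- `𝔹(T) = ⋃_𝔭 𝔹_𝔭(T)`: `β ∈ 𝔹(T)` iff `β ∉ T`, the set `𝔹_𝔭 − T̃_𝔭` is nonempty, and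
`𝔹_𝔭 − T̃_𝔭 ≠ {β}` (this encodes all three cases of the definition of `𝔹_𝔭(T)`). -/
def BT (σ : Equiv.Perm B) (T : Set B) : Set B :=
  {β | β ∉ T ∧ (orbit σ β \ tilde σ T).Nonempty ∧ orbit σ β \ tilde σ T ≠ {β}}

/-- The sign function `ε_T : 𝔹 → {−1,0,1}`. -/
def epsT (σ : Equiv.Perm B) (T : Set B) (β : B) : ℚ :=
  if orbit σ β ⊆ T then 0
  else if β ∈ tilde σ T then (-1 : ℚ) ^ (mu σ T β - 1) else 1

/-- `L^ε[β, β'](κ) = Σ_{0 ≤ i ≤ n} ε(σ^iβ) p^i k_{σ^iβ}`, where `β' = σ^n β` with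
`0 ≤ n < |𝔹_𝔭|`. -/
def Lfun (σ : Equiv.Perm B) (p : ℕ) (ε : B → ℚ) (β β' : B) (κ : B → ℚ) : ℚ :=
  ∑ i ∈ Finset.range (steps0 σ β β' + 1), ε ((σ ^ i) β) * (p : ℚ) ^ i * κ ((σ ^ i) β)

/-- `L^ε[β] = L^ε[β, σ⁻¹β]`. -/
def Lfun1 (σ : Equiv.Perm B) (p : ℕ) (ε : B → ℚ) (β : B) (κ : B → ℚ) : ℚ :=
  Lfun σ p ε β (σ⁻¹ β) κ

/-- `L_{T,β}` for `β ∈ 𝔹 − T`: `L^{ε_T}[σ^{μ_β}β]` if `β ∈ 𝔹 − T̃`, and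
`L^{ε_T}[β, σ^{μ_β−1}β]` if `β ∈ T̃ − T`. -/
def LT (σ : Equiv.Perm B) (p : ℕ) (T : Set B) (β : B) (κ : B → ℚ) : ℚ :=
  if β ∈ tilde σ T then Lfun σ p (epsT σ T) β ((σ ^ (mu σ T β - 1)) β) κ
  else Lfun1 σ p (epsT σ T) ((σ ^ mu σ T β) β) κ

/-- `ε_{T,f_β}`: negates `ε_T` on `{β, σβ, …, σ^{μ_β−1}β}`. -/
def epsTf (σ : Equiv.Perm B) (T : Set B) (β τ : B) : ℚ :=
  if ∃ i < mu σ T β, τ = (σ ^ i) β then -(epsT σ T τ) else epsT σ T τ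

/-- `L_{T,f_β,τ}` for `β ∈ 𝔹(T)` and `τ ∈ 𝔹 − (T ∪ {σ^{n_β}β})`, with `β′ = σ^{n_β}β` and
`β̃ = σ^{μ_{β′}}β′`. -/
def LTf (σ : Equiv.Perm B) (p : ℕ) (T : Set B) (β τ : B) (κ : B → ℚ) : ℚ :=
  if τ = β then
    (if β ∈ tilde σ T then
      Lfun1 σ p (epsTf σ T β) ((σ ^ mu σ T ((σ ^ nn σ T β) β)) ((σ ^ nn σ T β) β)) κ
    else
      Lfun σ p (epsTf σ T β) β (σ⁻¹ ((σ ^ mu σ T ((σ ^ nn σ T β) β)) ((σ ^ nn σ T β) β))) κ)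
  else
    (if τ ∈ tilde σ T then LT σ p T τ κ
     else Lfun1 σ p (epsTf σ T β) ((σ ^ mu σ T τ) τ) κ)

/-- `𝒟_{T,f_β} = {κ : L_{T,f_β,τ}(κ) ≥ 0 for all τ ∈ 𝔹 − (T ∪ {σ^{n_β}β})}`. -/
def Df (σ : Equiv.Perm B) (p : ℕ) (T : Set B) (β : B) : Set (B → ℚ) :=
  {κ | ∀ τ, τ ∉ T → τ ≠ (σ ^ nn σ T β) β → 0 ≤ LTf σ p T β τ κ}

/-- `i_T : ℚ^𝔹 → ℚ^{𝔹−T}`, the linear map with `i_T(e_β) = 0` if `T_𝔭 = 𝔹_𝔭` and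
`i_T(e_β) = (−p)^{ν_β} e_{σ^{−ν_β}β}` otherwise. -/
def iT (σ : Equiv.Perm B) (p : ℕ) (T : Set B) (κ : B → ℚ) : {β : B // β ∉ T} → ℚ :=
  fun β₀ => ∑ β : B, κ β *
    (if orbit σ β ⊆ T then 0
     else if (σ⁻¹ ^ nu σ T β) β = β₀.1 then (-(p : ℚ)) ^ nu σ T β else 0)

/-- Restriction to `ℚ^{𝔹−T}` of a vector of `ℚ^𝔹` (used for vectors supported on `𝔹 − T`). -/
def res (T : Set B) (v : B → ℚ) : {β : B // β ∉ T} → ℚ := fun β => v β.1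

/-- The generating set `𝒢^{T-red}(T) = ⋃_𝔭 𝒢_𝔭^{T-red}(T)` of the reduced cone. -/
def Gred (σ : Equiv.Perm B) (p : ℕ) (T : Set B) : Set ({β : B // β ∉ T} → ℚ) :=
  {v | ∃ β, β ∉ tilde σ T ∧ v = res T (fH σ p T β)}
  ∪ {v | ∃ β, β ∈ tilde σ T ∧ β ∉ T ∧ ¬ orbit σ β ⊆ tilde σ T ∧ v = res T (-(fB σ p T β))}
  ∪ {v | ∃ β, β ∉ T ∧ orbit σ β ⊆ tilde σ T ∧ v = res T (-(e β))}

/-- The minimal cone `𝒞^min_T = i_T(𝒟_T ∩ ⋂_{β ∈ 𝔹(T)} 𝒟_{T,f_β}) ⊆ ℚ^{𝔹−T}`. -/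
def Cmin (σ : Equiv.Perm B) (p : ℕ) (T : Set B) : Set ({β : B // β ∉ T} → ℚ) :=
  iT σ p T '' (D σ p T ∩ {κ | ∀ β ∈ BT σ T, κ ∈ Df σ p T β})

/-- `g_β`: `b_β` if `β ∈ T_𝔭`; `−e_β` if `β ∈ T̃_𝔭 − T_𝔭` and `𝔹_𝔭 = T̃_𝔭`;
`−b_{σ^{n_β}β}^β` if `β ∈ T̃_𝔭 − T_𝔭` and `𝔹_𝔭 ≠ T̃_𝔭`; `h_{σ^{n_β}β}^β` if `β ∈ 𝔹_𝔭 − T̃_𝔭`. -/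
def gvec (σ : Equiv.Perm B) (p : ℕ) (T : Set B) (β : B) : B → ℚ :=
  if β ∈ T then bsimple σ p β
  else if orbit σ β ⊆ tilde σ T then -(e β)
  else if β ∈ tilde σ T then -(fB σ p T β)
  else fH σ p T β

/-- The map `σ̄ : β ↦ σ^{n_β} β`. -/
def sigbar (σ : Equiv.Perm B) (T : Set B) (β : B) : B := (σ ^ nn σ T β) β

/-- `h_β = -e_β + p e_{σ⁻¹β}` as an element of `ℤ^𝔹`. -/
def hZ (σ : Equiv.Perm B) (p : ℕ) (β : B) : B → ℤ :=
  fun τ => (if τ = β then -1 else 0) + (if τ = σ⁻¹ β then (p : ℤ) else 0)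

end GO

end

/-!
Modulo the vectors `±b_β` with `β ∈ T`, every generator of either cone is, up to a positive scalar,
`h_{σⁿγ}^γ` with `γ ∉ T̃` or `-b_{σⁿγ}^γ` with `γ ∈ T̃ − T`. Indeed, in the latter case `σγ ∈ T` and
`h_{σⁿ⁺¹γ}^{σγ} = pⁿ b_{σγ} - b_{σⁿ⁺¹γ}^γ`, and `-e_γ` arises from `σⁿγ = γ`.

These vectors are cocycles in `n`, so concatenating the segments between successive points outside
`T̃` produces from the generators of `𝒟′_T` all those whose end point `σⁿγ` is not in `T̃`. A closed
path from `γ ∉ T̃` gives `(pⁿ - 1) e_γ`, hence `e_γ ∈ 𝒟′_T`, and then `-e_γ ∈ 𝒟′_T` for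
`γ ∈ T̃ − T`; this handles the remaining end points `σⁿγ ∈ T̃ − T`.
-/

namespace GO

open Function PointedCone

section Cone

theorem cone_eq_coe_hull {V : Type*} [AddCommMonoid V] [Module ℚ V] (S : Set V) :
    cone S = (hull ℚ S : Set V) := by
  ext x
  simp only [cone, Set.mem_ofPred_eq, SetLike.mem_coe, hull, Submodule.mem_span_set']
  constructor
  · rintro ⟨n, c, v, hc, hv, rfl⟩
    exact ⟨n, fun i => ⟨c i, hc i⟩, fun i => ⟨v i, hv i⟩, rfl⟩
  · rintro ⟨n, c, v, rfl⟩
    exact ⟨n, fun i => c i, fun i => v i, fun i => (c i).2, fun i => (v i).2, rfl⟩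

theorem mem_of_smul_mem {𝕜 V : Type*} [Field 𝕜] [LinearOrder 𝕜] [IsStrictOrderedRing 𝕜]
    [AddCommMonoid V] [Module 𝕜 V] (C : PointedCone 𝕜 V) {c : 𝕜} {x : V} (hc : 0 < c)
    (h : c • x ∈ C) : x ∈ C := by
  simpa only [inv_smul_smul₀ hc.ne'] using C.smul_mem (inv_nonneg.2 hc.le) h

end Cone

section Orbits

variable {B : Type*} {σ : Equiv.Perm B} {T : Set B} {β β' γ : B}

theorem sameOrbit.exists_pos_pow_apply_eq (hσ : ∀ β, β ∈ periodicPts σ) (h : sameOrbit σ β β') :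
    ∃ k, 0 < k ∧ (σ ^ k) β' = β := by
  obtain ⟨n, rfl⟩ := h
  obtain ⟨d, hd, hper⟩ := mem_periodicPts.1 (hσ β)
  have hn : n < (n + 1) * d := Nat.lt_of_lt_of_le n.lt_succ_self (Nat.le_mul_of_pos_right _ hd)
  refine ⟨(n + 1) * d - n, Nat.sub_pos_of_lt hn, ?_⟩
  rw [← Equiv.Perm.mul_apply, ← pow_add, Nat.sub_add_cancel hn.le, ← Equiv.Perm.iterate_eq_pow]
  exact hper.const_mul (n + 1)

theorem sameOrbit.symm (hσ : ∀ β, β ∈ periodicPts σ) (h : sameOrbit σ β β') :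
    sameOrbit σ β' β :=
  let ⟨k, _, hk⟩ := h.exists_pos_pow_apply_eq hσ
  ⟨k, hk⟩

theorem sameOrbit.apply_right (h : sameOrbit σ β β') : sameOrbit σ β (σ β') := by
  obtain ⟨n, rfl⟩ := h
  exact ⟨n + 1, by rw [pow_succ', Equiv.Perm.mul_apply]⟩

theorem pow_steps_apply (hσ : ∀ β, β ∈ periodicPts σ) (h : sameOrbit σ β β') :
    (σ ^ steps σ β' β) β' = β :=
  (Nat.sInf_mem (h.exists_pos_pow_apply_eq hσ)).2

theorem steps_pow_apply {n : ℕ} (hn : 0 < n)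
    (hne : ∀ k, 0 < k → k < n → (σ ^ k) γ ≠ (σ ^ n) γ) : steps σ γ ((σ ^ n) γ) = n :=
  IsLeast.csInf_eq ⟨⟨hn, rfl⟩, fun k hk => not_lt.1 fun hlt => hne k hk.1 hlt hk.2⟩

theorem apply_mem_of_mem_tilde (hγ : γ ∈ tilde σ T) (hγT : γ ∉ T) : σ γ ∈ T := by
  obtain ⟨C, ⟨β, m, -, -, hm, rfl⟩, hγC⟩ : ∃ C, IsChainIn σ T C ∧ γ ∈ chainExt σ C := by
    simpa only [tilde, Set.mem_union, hγT, false_or, Set.mem_iUnion, exists_prop] using hγ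
  have chain_subset : {τ | ∃ i ≤ m, τ = (σ⁻¹ ^ i) β} ⊆ T := by
    rintro _ ⟨i, hi, rfl⟩
    exact hm i hi
  unfold chainExt at hγC
  split_ifs at hγC
  · obtain hγC | ⟨τ, hτ, rfl⟩ := hγC
    · exact absurd (chain_subset hγC) hγT
    · simpa using chain_subset hτ
  · exact absurd (chain_subset hγC) hγT

theorem notMem_of_notMem_tilde (hγ : γ ∉ tilde σ T) : γ ∉ T :=
  fun hγT => hγ (.inl hγT)

theorem nn_spec (hσ : ∀ β, β ∈ periodicPts σ) (h : ¬ orbit σ γ ⊆ tilde σ T) :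
    0 < nn σ T γ ∧ (σ ^ nn σ T γ) γ ∉ tilde σ T := by
  obtain ⟨τ, hτ, hτT⟩ := Set.not_subset.1 h
  obtain ⟨k, hk, rfl⟩ := (sameOrbit.symm hσ hτ).exists_pos_pow_apply_eq hσ
  exact Nat.sInf_mem (s := {i | 0 < i ∧ (σ ^ i) γ ∉ tilde σ T}) ⟨k, hk, hτT⟩

theorem nn_le {k : ℕ} (hk : 0 < k) (h : (σ ^ k) γ ∉ tilde σ T) : nn σ T γ ≤ k :=
  Nat.sInf_le ⟨hk, h⟩

theorem not_orbit_subset_tilde {k : ℕ} (h : (σ ^ k) γ ∉ tilde σ T) :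
    ¬ orbit σ γ ⊆ tilde σ T :=
  fun hsub => h (hsub ⟨k, rfl⟩)

theorem pow_apply_ne_pow_nn_apply (hσ : ∀ β, β ∈ periodicPts σ) (h : ¬ orbit σ γ ⊆ tilde σ T)
    {k : ℕ} (hk : 0 < k) (hlt : k < nn σ T γ) : (σ ^ k) γ ≠ (σ ^ nn σ T γ) γ :=
  fun heq => hlt.not_ge (nn_le hk (heq ▸ (nn_spec hσ h).2))

theorem steps_pow_nn_apply (hσ : ∀ β, β ∈ periodicPts σ) (h : ¬ orbit σ γ ⊆ tilde σ T) :
    steps σ γ ((σ ^ nn σ T γ) γ) = nn σ T γ :=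
  steps_pow_apply (nn_spec hσ h).1 fun _ => pow_apply_ne_pow_nn_apply hσ h

theorem steps_apply_pow_nn_apply (hσ : ∀ β, β ∈ periodicPts σ) (hγ : ¬ orbit σ γ ⊆ tilde σ T)
    (hσγ : σ γ ∈ T) : steps σ (σ γ) ((σ ^ nn σ T γ) γ) + 1 = nn σ T γ := by
  obtain ⟨hpos, hexit⟩ := nn_spec hσ hγ
  have hmin := fun k => pow_apply_ne_pow_nn_apply (k := k) hσ hγ
  obtain ⟨n, hn⟩ := Nat.exists_eq_add_of_le' hpos
  rw [hn] at hexit hmin ⊢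
  have hn0 : n ≠ 0 := by
    rintro rfl
    exact hexit (.inl (by simpa using hσγ))
  simp only [pow_succ, Equiv.Perm.mul_apply] at hmin ⊢
  rw [steps_pow_apply (Nat.pos_of_ne_zero hn0) fun k _ hkn => ?_]
  simpa only [pow_succ, Equiv.Perm.mul_apply] using hmin (k + 1) k.succ_pos (by omega)

end Orbits

section Vectors

variable {B : Type*} [DecidableEq B] {σ : Equiv.Perm B} {p : ℕ} {γ : B}

/-- The vector `h_{σⁿγ}^γ = -e_{σⁿγ} + pⁿ e_γ`, for every `n`: unlike in `hvec`, the number of steps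
from `γ` to `σⁿγ` need not be the least positive one. -/
def hIter (σ : Equiv.Perm B) (p n : ℕ) (γ : B) : B → ℚ :=
  -(e ((σ ^ n) γ)) + (p : ℚ) ^ n • e γ

/-- The vector `b_{σⁿγ}^γ = e_{σⁿγ} + pⁿ e_γ`, for every `n`: unlike in `bvec`, the number of steps
from `γ` to `σⁿγ` need not be the least positive one. -/
def bIter (σ : Equiv.Perm B) (p n : ℕ) (γ : B) : B → ℚ :=
  e ((σ ^ n) γ) + (p : ℚ) ^ n • e γ

theorem hIter_zero : hIter σ p 0 γ = 0 := by
  simp [hIter]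

theorem hIter_add (m n : ℕ) :
    hIter σ p (m + n) γ = hIter σ p m ((σ ^ n) γ) + (p : ℚ) ^ m • hIter σ p n γ := by
  simp only [hIter, pow_add, Equiv.Perm.mul_apply]
  module

theorem neg_bIter_add (m n : ℕ) :
    -bIter σ p (m + n) γ = hIter σ p m ((σ ^ n) γ) + (p : ℚ) ^ m • -bIter σ p n γ := by
  simp only [hIter, bIter, pow_add, Equiv.Perm.mul_apply]
  module

theorem hIter_apply (n : ℕ) :
    hIter σ p n (σ γ) = (p : ℚ) ^ n • bsimple σ p (σ γ) + -bIter σ p (n + 1) γ := by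
  simp only [hIter, bIter, bsimple, pow_succ, Equiv.Perm.mul_apply,
    Equiv.Perm.inv_def, Equiv.symm_apply_apply]
  module

theorem hIter_of_pow_apply_eq_self {n : ℕ} (h : (σ ^ n) γ = γ) :
    hIter σ p n γ = ((p : ℚ) ^ n - 1) • e γ := by
  rw [hIter, h]
  module

theorem neg_bIter_of_pow_apply_eq_self {n : ℕ} (h : (σ ^ n) γ = γ) :
    -bIter σ p n γ = ((p : ℚ) ^ n + 1) • -e γ := by
  rw [bIter, h]
  module

theorem hvec_eq_hIter {β β' : B} (h : (σ ^ steps σ β' β) β' = β) :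
    hvec σ p β β' = hIter σ p (steps σ β' β) β' := by
  rw [hvec, hIter, h]

end Vectors

variable {B : Type*} [DecidableEq B] {σ : Equiv.Perm B} {p : ℕ} {T : Set B} {β γ : B}

section GeneratorsOfD'

theorem fH_mem_hull_Dgen (hσ : ∀ β, β ∈ periodicPts σ) (hγ : γ ∉ tilde σ T) :
    fH σ p T γ ∈ hull ℚ (Dgen σ p T) := by
  have horb : ¬ orbit σ γ ⊆ tilde σ T := not_orbit_subset_tilde (k := 0) hγ
  have hexit : (σ ^ nn σ T γ) γ ∉ T := notMem_of_notMem_tilde (nn_spec hσ horb).2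
  have heq : fH σ p T γ = hvec σ p ((σ ^ nn σ T γ) γ) γ := by
    rw [fH, hvec, steps_pow_nn_apply hσ horb]
  exact subset_hull (.inl ⟨_, γ, hexit, .inl hγ, sameOrbit.symm hσ ⟨_, rfl⟩, heq⟩)

theorem neg_bIter_steps_mem_hull_Dgen (hσ : ∀ β, β ∈ periodicPts σ) (hγ : γ ∈ tilde σ T)
    (hγT : γ ∉ T) (hβT : β ∉ T) (h : sameOrbit σ β γ) :
    -bIter σ p (steps σ (σ γ) β + 1) γ ∈ hull ℚ (Dgen σ p T) := by
  have hh : hvec σ p β (σ γ) ∈ hull ℚ (Dgen σ p T) :=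
    subset_hull (.inl ⟨β, σ γ, hβT, .inr ⟨γ, ⟨hγ, hγT⟩, rfl⟩, h.apply_right, rfl⟩)
  have hb : -bsimple σ p (σ γ) ∈ hull ℚ (Dgen σ p T) :=
    subset_hull (.inr ⟨σ γ, apply_mem_of_mem_tilde hγ hγT, .inr rfl⟩)
  rw [hvec_eq_hIter (pow_steps_apply hσ h.apply_right), hIter_apply] at hh
  convert add_mem hh (PointedCone.smul_mem _ (r := (p : ℚ) ^ steps σ (σ γ) β) (by positivity) hb)
    using 1
  module

theorem neg_fB_mem_hull_Dgen (hσ : ∀ β, β ∈ periodicPts σ) (hγ : γ ∈ tilde σ T) (hγT : γ ∉ T)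
    (horb : ¬ orbit σ γ ⊆ tilde σ T) : -fB σ p T γ ∈ hull ℚ (Dgen σ p T) := by
  have hexit : (σ ^ nn σ T γ) γ ∉ T := notMem_of_notMem_tilde (nn_spec hσ horb).2
  have hmem := neg_bIter_steps_mem_hull_Dgen (p := p) hσ hγ hγT hexit (sameOrbit.symm hσ ⟨_, rfl⟩)
  rwa [steps_apply_pow_nn_apply hσ horb (apply_mem_of_mem_tilde hγ hγT)] at hmem

theorem neg_e_mem_hull_Dgen (hσ : ∀ β, β ∈ periodicPts σ) (hγ : γ ∈ tilde σ T) (hγT : γ ∉ T) :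
    -e γ ∈ hull ℚ (Dgen σ p T) := by
  have hγγ : sameOrbit σ γ γ := ⟨0, rfl⟩
  have hclosed : (σ ^ (steps σ (σ γ) γ + 1)) γ = γ := by
    rw [pow_succ, Equiv.Perm.mul_apply, pow_steps_apply hσ hγγ.apply_right]
  have hmem := neg_bIter_steps_mem_hull_Dgen (p := p) hσ hγ hγT hγT hγγ
  rw [neg_bIter_of_pow_apply_eq_self hclosed] at hmem
  exact mem_of_smul_mem _ (by positivity) hmem

theorem D'gen_subset_hull_Dgen (hσ : ∀ β, β ∈ periodicPts σ) :
    D'gen σ p T ⊆ hull ℚ (Dgen σ p T) := by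
  rintro _ (((⟨γ, hγ, rfl⟩ | ⟨γ, hγ, hγT, horb, rfl⟩) | ⟨γ, hγT, horb, rfl⟩) | hb)
  · exact fH_mem_hull_Dgen hσ hγ
  · exact neg_fB_mem_hull_Dgen hσ hγ hγT horb
  · exact neg_e_mem_hull_Dgen hσ (horb ⟨0, rfl⟩) hγT
  · exact subset_hull (.inr hb)

end GeneratorsOfD'

section GeneratorsOfD

theorem hIter_mem_hull_D'gen_of_notMem_tilde (hσ : ∀ β, β ∈ periodicPts σ) {k : ℕ}
    (hγ : γ ∉ tilde σ T) (hk : (σ ^ k) γ ∉ tilde σ T) :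
    hIter σ p k γ ∈ hull ℚ (D'gen σ p T) := by
  induction k using Nat.strong_induction_on generalizing γ with
  | _ k ih =>
    obtain rfl | hpos := k.eq_zero_or_pos
    · rw [hIter_zero]
      exact zero_mem _
    obtain ⟨hnn, hexit⟩ := nn_spec hσ (not_orbit_subset_tilde hk)
    have hfirst : hIter σ p (nn σ T γ) γ ∈ hull ℚ (D'gen σ p T) :=
      subset_hull (.inl (.inl (.inl ⟨γ, hγ, rfl⟩)))
    obtain ⟨m, hm⟩ := Nat.exists_eq_add_of_le' (nn_le hpos hk)
    rw [hm, pow_add, Equiv.Perm.mul_apply] at hk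
    rw [hm, hIter_add]
    exact add_mem (ih m (by omega) hexit hk) (PointedCone.smul_mem _ (by positivity) hfirst)

theorem neg_bIter_mem_hull_D'gen_of_notMem_tilde (hσ : ∀ β, β ∈ periodicPts σ) {k : ℕ}
    (hγ : γ ∈ tilde σ T) (hγT : γ ∉ T) (hk : (σ ^ k) γ ∉ tilde σ T) :
    -bIter σ p k γ ∈ hull ℚ (D'gen σ p T) := by
  have hpos : 0 < k := Nat.pos_of_ne_zero fun h0 => hk (by simpa [h0] using hγ)
  have horb := not_orbit_subset_tilde hk
  have hfirst : -bIter σ p (nn σ T γ) γ ∈ hull ℚ (D'gen σ p T) :=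
    subset_hull (.inl (.inl (.inr ⟨γ, hγ, hγT, horb, rfl⟩)))
  obtain ⟨m, hm⟩ := Nat.exists_eq_add_of_le' (nn_le hpos hk)
  rw [hm, pow_add, Equiv.Perm.mul_apply] at hk
  rw [hm, neg_bIter_add]
  exact add_mem (hIter_mem_hull_D'gen_of_notMem_tilde hσ (nn_spec hσ horb).2 hk)
    (PointedCone.smul_mem _ (by positivity) hfirst)

theorem e_mem_hull_D'gen (hσ : ∀ β, β ∈ periodicPts σ) (hp : 1 < p) (hγ : γ ∉ tilde σ T) :
    e γ ∈ hull ℚ (D'gen σ p T) := by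
  obtain ⟨d, hd, hper⟩ := mem_periodicPts.1 (hσ γ)
  have hclosed : (σ ^ d) γ = γ := by rwa [← Equiv.Perm.iterate_eq_pow]
  have hmem := hIter_mem_hull_D'gen_of_notMem_tilde (p := p) (k := d) hσ hγ (by rwa [hclosed])
  rw [hIter_of_pow_apply_eq_self hclosed] at hmem
  have hpd : 1 < (p : ℚ) ^ d := one_lt_pow₀ (mod_cast hp) hd.ne'
  exact mem_of_smul_mem _ (sub_pos.2 hpd) hmem

theorem neg_e_mem_hull_D'gen (hσ : ∀ β, β ∈ periodicPts σ) (hp : 1 < p) (hγ : γ ∈ tilde σ T)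
    (hγT : γ ∉ T) : -e γ ∈ hull ℚ (D'gen σ p T) := by
  by_cases horb : orbit σ γ ⊆ tilde σ T
  · exact subset_hull (.inl (.inr ⟨γ, hγT, horb, rfl⟩))
  · obtain ⟨-, hexit⟩ := nn_spec hσ horb
    have hpn : 0 < (p : ℚ) ^ nn σ T γ := by positivity
    refine mem_of_smul_mem _ hpn ?_
    convert add_mem (neg_bIter_mem_hull_D'gen_of_notMem_tilde (p := p) hσ hγ hγT hexit)
      (e_mem_hull_D'gen hσ hp hexit) using 1
    rw [bIter]
    module

theorem hIter_mem_hull_D'gen (hσ : ∀ β, β ∈ periodicPts σ) (hp : 1 < p) {k : ℕ}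
    (hγ : γ ∉ tilde σ T) (hk : (σ ^ k) γ ∉ T) : hIter σ p k γ ∈ hull ℚ (D'gen σ p T) := by
  by_cases hkt : (σ ^ k) γ ∈ tilde σ T
  · exact add_mem (neg_e_mem_hull_D'gen hσ hp hkt hk)
      (PointedCone.smul_mem _ (by positivity) (e_mem_hull_D'gen hσ hp hγ))
  · exact hIter_mem_hull_D'gen_of_notMem_tilde hσ hγ hkt

theorem neg_bIter_mem_hull_D'gen (hσ : ∀ β, β ∈ periodicPts σ) (hp : 1 < p) {k : ℕ}
    (hγ : γ ∈ tilde σ T) (hγT : γ ∉ T) (hk : (σ ^ k) γ ∉ T) :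
    -bIter σ p k γ ∈ hull ℚ (D'gen σ p T) := by
  by_cases hkt : (σ ^ k) γ ∈ tilde σ T
  · rw [bIter, neg_add, ← smul_neg]
    exact add_mem (neg_e_mem_hull_D'gen hσ hp hkt hk)
      (PointedCone.smul_mem _ (by positivity) (neg_e_mem_hull_D'gen hσ hp hγ hγT))
  · exact neg_bIter_mem_hull_D'gen_of_notMem_tilde hσ hγ hγT hkt

theorem hIter_mem_hull_D'gen_of_mem_Tscr (hσ : ∀ β, β ∈ periodicPts σ) (hp : 1 < p) {k : ℕ}
    (hγ : γ ∈ Tscr σ T) (hk : (σ ^ k) γ ∉ T) : hIter σ p k γ ∈ hull ℚ (D'gen σ p T) := by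
  obtain hγ | ⟨γ, ⟨hγ, hγT⟩, rfl⟩ := hγ
  · exact hIter_mem_hull_D'gen hσ hp hγ hk
  · have hb : bsimple σ p (σ γ) ∈ hull ℚ (D'gen σ p T) :=
      subset_hull (.inr ⟨σ γ, apply_mem_of_mem_tilde hγ hγT, .inl rfl⟩)
    rw [hIter_apply]
    rw [← Equiv.Perm.mul_apply, ← pow_succ] at hk
    exact add_mem (PointedCone.smul_mem _ (by positivity) hb)
      (neg_bIter_mem_hull_D'gen hσ hp hγ hγT hk)

theorem Dgen_subset_hull_D'gen (hσ : ∀ β, β ∈ periodicPts σ) (hp : 1 < p) :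
    Dgen σ p T ⊆ hull ℚ (D'gen σ p T) := by
  rintro _ (⟨β, β', hβT, hβ', h, rfl⟩ | hb)
  · have hsteps := pow_steps_apply hσ h
    rw [hvec_eq_hIter hsteps]
    exact hIter_mem_hull_D'gen_of_mem_Tscr hσ hp hβ' (by rwa [hsteps])
  · exact subset_hull (.inr hb)

end GeneratorsOfD

end GO

theorem statement0_general {B : Type*} [DecidableEq B] (σ : Equiv.Perm B)
    (hσ : ∀ β, β ∈ Function.periodicPts σ) (p : ℕ) (hp : 1 < p) (T : Set B) :
    GO.D' σ p T = GO.D σ p T := by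
  rw [GO.D', GO.D, GO.cone_eq_coe_hull, GO.cone_eq_coe_hull]
  exact congrArg _ (le_antisymm (Submodule.span_le.2 (GO.D'gen_subset_hull_Dgen hσ))
    (Submodule.span_le.2 (GO.Dgen_subset_hull_D'gen hσ hp)))

/-- For every subset `T ⊆ 𝔹`, the cones `𝒟′_T` and `𝒟_T` coincide. -/
theorem statement0 {B : Type*} [Fintype B] [DecidableEq B] [Nonempty B]
    (σ : Equiv.Perm B) (p : ℕ) (hp : p.Prime) (T : Set B) :
    GO.D' σ p T = GO.D σ p T :=
  statement0_general σ σ.injective.mem_periodicPts p hp.one_lt T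
end

section
/- If T ⊆ 𝔹 satisfies T̃ = T, then 𝒟_T equals the ℚ^{≥0}-cone generated by {h_β : β ∈ 𝔹 − T} ∪ {b_β, −b_β : β ∈ T}. -/
/- Setting: `B` is the finite nonempty set 𝔹 equipped with a permutation `σ` (Frobenius),
and `p` is a prime.  Weights live in `ℚ^𝔹 = (B → ℚ)`.  The orbits `𝔹_𝔭` of `σ` are the sets
`orbit σ β`, and for `T ⊆ 𝔹` we have `T_𝔭 = T ∩ orbit σ β`. -/

open scoped Classical

/-!
Write `h_β^{(n)} = -e_β + pⁿ e_{σ⁻ⁿβ}`, so that `h_β = h_β^{(1)}`. Modulo the vectors `b_τ` with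
`τ ∈ T` one has `e_τ ≡ -p e_{σ⁻¹τ}` for `τ ∈ T`. For `β ∉ T` let `n` be the least positive integer
with `σ⁻ⁿβ ∉ T`. If `n > 1`, the `n - 1` elements of the orbit strictly between `β` and `σ⁻ⁿβ` form
a chain of `T`, and `T̃ = T` says that all chains have even cardinality. Hence `n` is odd, the sign
`(-1)ⁿ⁻¹` disappears, and `h_β ≡ h_β^{(n)}`, which is one of the generators `h_β^{β'}` of `𝒟_T`.
Conversely, the telescoping identity `h_β^{(m+n)} = h_β^{(m)} + pᵐ h_{σ⁻ᵐβ}^{(n)}` writes every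
generator `h_β^{β'}` as a nonnegative combination of those belonging to first returns to `𝔹 − T`.
-/

namespace GO

section Cone

variable {V : Type*}

theorem cone_eq_hull [AddCommMonoid V] [Module ℚ V] (S : Set V) :
    cone S = (PointedCone.hull ℚ S : Set V) := by
  ext x
  simp only [cone, Set.mem_ofPred_eq, SetLike.mem_coe, PointedCone.hull, Submodule.mem_span_set']
  constructor
  · rintro ⟨n, c, v, hc, hv, rfl⟩
    exact ⟨n, fun i => ⟨c i, hc i⟩, fun i => ⟨v i, hv i⟩, rfl⟩
  · rintro ⟨n, c, v, rfl⟩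
    exact ⟨n, fun i => c i, fun i => v i, fun i => (c i).2, fun i => (v i).2, rfl⟩

theorem mem_iff_mem_of_sub_mem_lineal {R : Type*} [Ring R] [LinearOrder R] [IsOrderedRing R]
    [AddCommGroup V] [Module R V] {C : PointedCone R V} {x y : V} (h : x - y ∈ C.lineal) :
    x ∈ C ↔ y ∈ C := by
  obtain ⟨hxy, hyx⟩ := PointedCone.mem_lineal.1 h
  exact ⟨fun hx => by simpa using C.add_mem hx hyx, fun hy => by simpa using C.add_mem hy hxy⟩

end Cone

section Permutation

variable {B : Type*} {σ : Equiv.Perm B} {T : Set B} {β β' : B} {n : ℕ}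

theorem inv_pow_add_apply (σ : Equiv.Perm B) (m n : ℕ) (β : B) :
    (σ⁻¹ ^ (m + n)) β = (σ⁻¹ ^ n) ((σ⁻¹ ^ m) β) := by
  rw [add_comm, pow_add, Equiv.Perm.mul_apply]

theorem inv_pow_apply_inv_apply (σ : Equiv.Perm B) (n : ℕ) (β : B) :
    (σ⁻¹ ^ n) (σ⁻¹ β) = (σ⁻¹ ^ (n + 1)) β := by
  rw [pow_succ, Equiv.Perm.mul_apply]

theorem pow_apply_eq_iff_inv_pow_apply_eq : (σ ^ n) β' = β ↔ (σ⁻¹ ^ n) β = β' := by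
  rw [inv_pow, Equiv.Perm.inv_eq_iff_eq, eq_comm]

theorem exists_pos_pow_apply_eq_inv_pow_apply (hβ : β ∈ Function.periodicPts σ) (m : ℕ) :
    ∃ n, 0 < n ∧ (σ ^ n) β = (σ⁻¹ ^ m) β := by
  obtain ⟨k, hk, hper⟩ := hβ
  have hle : m + 1 ≤ k * (m + 1) := Nat.le_mul_of_pos_left _ hk
  refine ⟨k * (m + 1) - m, by omega, ?_⟩
  rw [eq_comm, ← pow_apply_eq_iff_inv_pow_apply_eq, ← Equiv.Perm.mul_apply, ← pow_add,
    Nat.add_sub_cancel' (by omega), ← Equiv.Perm.iterate_eq_pow]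
  exact hper.mul_const (m + 1)

theorem sameOrbit_inv_pow_apply (hβ : β ∈ Function.periodicPts σ) (n : ℕ) :
    sameOrbit σ β ((σ⁻¹ ^ n) β) :=
  let ⟨k, _, hk⟩ := exists_pos_pow_apply_eq_inv_pow_apply hβ n
  ⟨k, hk⟩

theorem inv_pow_steps_apply (hβ : β ∈ Function.periodicPts σ) (h : sameOrbit σ β β') :
    (σ⁻¹ ^ steps σ β' β) β = β' := by
  obtain ⟨m, rfl⟩ := h
  obtain ⟨n, hn, hnm⟩ := exists_pos_pow_apply_eq_inv_pow_apply hβ m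
  have hne : {k : ℕ | 0 < k ∧ (σ ^ k) ((σ ^ m) β) = β}.Nonempty := by
    refine ⟨n, hn, ?_⟩
    rw [← Equiv.Perm.mul_apply, pow_mul_comm, Equiv.Perm.mul_apply, hnm,
      pow_apply_eq_iff_inv_pow_apply_eq]
  exact pow_apply_eq_iff_inv_pow_apply_eq.1 (Nat.sInf_mem hne).2

/-- The positive times `n` at which the backward orbit `σ⁻¹β, σ⁻²β, …` of `β` lies outside `T`.
For `β ∉ T`, the least one is the time of first return to `𝔹 − T`. -/
def returnTimes (σ : Equiv.Perm B) (T : Set B) (β : B) : Set ℕ :=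
  {n | 0 < n ∧ (σ⁻¹ ^ n) β ∉ T}

theorem inv_pow_apply_mem_of_lt_least (hn : IsLeast (returnTimes σ T β) n) {i : ℕ} (hi : 0 < i)
    (hin : i < n) : (σ⁻¹ ^ i) β ∈ T :=
  not_not.1 fun h => hin.not_ge (hn.2 ⟨hi, h⟩)

theorem exists_isLeast_returnTimes (hper : β ∈ Function.periodicPts σ) (hβ : β ∉ T) :
    ∃ n, IsLeast (returnTimes σ T β) n := by
  obtain ⟨n, hn, hfix⟩ := exists_pos_pow_apply_eq_inv_pow_apply hper 0
  have hmem : n ∈ returnTimes σ T β :=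
    ⟨hn, by rwa [show (σ⁻¹ ^ n) β = β from pow_apply_eq_iff_inv_pow_apply_eq.1 hfix]⟩
  exact ⟨_, isLeast_csInf ⟨n, hmem⟩⟩

theorem steps_inv_pow_apply_of_isLeast (hn : IsLeast (returnTimes σ T β) n) :
    steps σ ((σ⁻¹ ^ n) β) β = n := by
  refine IsLeast.csInf_eq ⟨⟨hn.1.1, pow_apply_eq_iff_inv_pow_apply_eq.2 rfl⟩, ?_⟩
  rintro k ⟨hk, hkn⟩
  refine hn.2 ⟨hk, ?_⟩
  rw [pow_apply_eq_iff_inv_pow_apply_eq.1 hkn]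
  exact hn.1.2

theorem injOn_inv_pow_apply_Iio_of_isLeast (hβ : β ∉ T) (hn : IsLeast (returnTimes σ T β) n) :
    Set.InjOn (fun i => (σ⁻¹ ^ i) β) (Set.Iio n) := by
  have hne : ∀ i j, i < j → j < n → (σ⁻¹ ^ i) β ≠ (σ⁻¹ ^ j) β := by
    intro i j hij hjn heq
    obtain ⟨d, rfl⟩ := Nat.exists_eq_add_of_lt hij
    have hfix : (σ⁻¹ ^ (d + 1)) β = β := by
      rw [add_assoc, add_comm, inv_pow_add_apply] at heq
      exact ((σ⁻¹ ^ i).injective heq).symm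
    exact hβ (hfix ▸ inv_pow_apply_mem_of_lt_least hn d.succ_pos (by omega))
  intro i hi j hj heq
  rcases lt_trichotomy i j with hij | hij | hji
  · exact absurd heq (hne i j hij hj)
  · exact hij
  · exact absurd heq.symm (hne j i hji hi)

theorem isChainIn_image_Ioo_of_isLeast (hβ : β ∉ T) (hn : IsLeast (returnTimes σ T β) n)
    (htwo : 2 ≤ n) : IsChainIn σ T ((fun i => (σ⁻¹ ^ i) β) '' Set.Ioo 0 n) := by
  obtain ⟨m, rfl⟩ := Nat.exists_eq_add_of_le' htwo
  refine ⟨σ⁻¹ β, m, by simpa using hβ, ?_, fun i hi => ?_, ?_⟩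
  · rw [inv_pow_apply_inv_apply]
    exact hn.1.2
  · rw [inv_pow_apply_inv_apply]
    exact inv_pow_apply_mem_of_lt_least hn i.succ_pos (by omega)
  · ext τ
    constructor
    · rintro ⟨i, ⟨hi, him⟩, rfl⟩
      exact ⟨i - 1, by omega, by rw [inv_pow_apply_inv_apply, Nat.sub_add_cancel hi]⟩
    · rintro ⟨i, hi, rfl⟩
      exact ⟨i + 1, ⟨i.succ_pos, by omega⟩, (inv_pow_apply_inv_apply σ i β).symm⟩

theorem odd_of_isLeast_returnTimes (hT : tilde σ T = T) (hβ : β ∉ T)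
    (hn : IsLeast (returnTimes σ T β) n) : Odd n := by
  by_contra heven
  obtain ⟨m, rfl⟩ : ∃ m, n = m + 2 := Nat.exists_eq_add_of_le' <| by
    rcases n with _ | _ | n
    · exact absurd hn.1.1 (lt_irrefl 0)
    · exact absurd odd_one heven
    · omega
  have hinj : Set.InjOn (fun i => (σ⁻¹ ^ i) β) (Set.Ioo 0 (m + 2)) :=
    (injOn_inv_pow_apply_Iio_of_isLeast hβ hn).mono Set.Ioo_subset_Iio_self
  have hcard : Odd ((fun i => (σ⁻¹ ^ i) β) '' Set.Ioo 0 (m + 2)).ncard := by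
    rw [hinj.ncard_image, Set.ncard_eq_toFinset_card', Set.toFinset_Ioo, Nat.card_Ioo]
    simpa [Nat.odd_add, parity_simps] using heven
  have hmem : (σ⁻¹ ^ (m + 2)) β ∈ tilde σ T := by
    refine Or.inr (Set.mem_biUnion (isChainIn_image_Ioo_of_isLeast hβ hn (by omega)) ?_)
    rw [chainExt, if_pos hcard]
    refine Or.inr ⟨_, ⟨m + 1, ⟨m.succ_pos, by simp⟩, rfl⟩, ?_⟩
    rw [← Equiv.Perm.mul_apply, ← pow_succ']
  exact hn.1.2 (hT ▸ hmem)

theorem Tscr_eq_compl (hT : tilde σ T = T) : Tscr σ T = Tᶜ := by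
  simp [Tscr, hT]

end Permutation

section Generators

variable {B : Type*} [DecidableEq B] {σ : Equiv.Perm B} {p : ℕ} {T : Set B} {β β' : B} {n : ℕ}

/-- The vector `h_β^{(n)} = -e_β + pⁿ e_{σ⁻ⁿβ}`. It equals `h_β^{σ⁻ⁿβ}` when `0 < n ≤ |𝔹_𝔭|`, but
`n` is unrestricted here so that the vectors telescope in `n`. -/
def hpow (σ : Equiv.Perm B) (p n : ℕ) (β : B) : B → ℚ :=
  -(e β) + ((p : ℚ) ^ n) • e ((σ⁻¹ ^ n) β)

theorem hpow_zero (σ : Equiv.Perm B) (p : ℕ) (β : B) : hpow σ p 0 β = 0 := by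
  simp [hpow]

theorem hpow_add (σ : Equiv.Perm B) (p m n : ℕ) (β : B) :
    hpow σ p (m + n) β = hpow σ p m β + ((p : ℚ) ^ m) • hpow σ p n ((σ⁻¹ ^ m) β) := by
  rw [hpow, hpow, hpow, inv_pow_add_apply]
  module

theorem hvec_eq_hpow_steps (h : (σ⁻¹ ^ steps σ β' β) β = β') :
    hvec σ p β β' = hpow σ p (steps σ β' β) β := by
  rw [hvec, hpow, h]

theorem e_sub_neg_pow_smul_e_mem {L : Submodule ℚ (B → ℚ)} (hL : ∀ τ ∈ T, bsimple σ p τ ∈ L)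
    (hn : ∀ i < n, (σ⁻¹ ^ i) β ∈ T) :
    e β - (-(p : ℚ)) ^ n • e ((σ⁻¹ ^ n) β) ∈ L := by
  induction n with
  | zero => simp
  | succ n ih =>
    have hstep := L.smul_mem ((-(p : ℚ)) ^ n) (hL _ (hn n n.lt_succ_self))
    convert L.add_mem (ih fun i hi => hn i (hi.trans n.lt_succ_self)) hstep using 1
    rw [bsimple, pow_succ' σ⁻¹ n, Equiv.Perm.mul_apply]
    module

theorem hpow_sub_hsimple_mem {L : Submodule ℚ (B → ℚ)} (hL : ∀ τ ∈ T, bsimple σ p τ ∈ L)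
    (hn : IsLeast (returnTimes σ T β) n) (hodd : Odd n) :
    hpow σ p n β - hsimple σ p β ∈ L := by
  obtain ⟨k, rfl⟩ := hodd
  have hchain : ∀ i < 2 * k, (σ⁻¹ ^ i) (σ⁻¹ β) ∈ T := fun i hi => by
    rw [inv_pow_apply_inv_apply]
    exact inv_pow_apply_mem_of_lt_least hn i.succ_pos (by omega)
  convert L.smul_mem (-(p : ℚ)) (e_sub_neg_pow_smul_e_mem hL hchain) using 1
  rw [hpow, hsimple, inv_pow_apply_inv_apply, (even_two_mul k).neg_pow]
  module

theorem hpow_mem_iff_hsimple_mem (hT : tilde σ T = T) {C : PointedCone ℚ (B → ℚ)}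
    (hb : ∀ τ ∈ T, bsimple σ p τ ∈ C.lineal) (hβ : β ∉ T)
    (hn : IsLeast (returnTimes σ T β) n) :
    hpow σ p n β ∈ C ↔ hsimple σ p β ∈ C :=
  mem_iff_mem_of_sub_mem_lineal <|
    hpow_sub_hsimple_mem hb hn (odd_of_isLeast_returnTimes hT hβ hn)

theorem hpow_mem_of_hsimple_mem (hT : tilde σ T = T) {C : PointedCone ℚ (B → ℚ)}
    (hb : ∀ τ ∈ T, bsimple σ p τ ∈ C.lineal) (hh : ∀ τ ∉ T, hsimple σ p τ ∈ C)
    (hβ : β ∉ T) (hn : (σ⁻¹ ^ n) β ∉ T) : hpow σ p n β ∈ C := by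
  induction n using Nat.strong_induction_on generalizing β with
  | _ n ih =>
  rcases n.eq_zero_or_pos with rfl | hpos
  · rw [hpow_zero]
    exact C.zero_mem
  obtain ⟨r, hr⟩ : ∃ r, IsLeast (returnTimes σ T β) r := ⟨_, isLeast_csInf ⟨n, hpos, hn⟩⟩
  obtain ⟨d, rfl⟩ := Nat.exists_eq_add_of_le (hr.2 ⟨hpos, hn⟩)
  have hfirst : hpow σ p r β ∈ C := (hpow_mem_iff_hsimple_mem hT hb hβ hr).2 (hh β hβ)
  have hrest : hpow σ p d ((σ⁻¹ ^ r) β) ∈ C :=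
    ih d (Nat.lt_add_of_pos_left hr.1.1) hr.1.2 (inv_pow_add_apply σ r d β ▸ hn)
  rw [hpow_add]
  exact C.add_mem hfirst (C.smul_mem (by positivity) hrest)

theorem bsimple_mem_lineal_hull {S : Set (B → ℚ)}
    (hS : {v | ∃ τ ∈ T, v = bsimple σ p τ ∨ v = -(bsimple σ p τ)} ⊆ S) (hβ : β ∈ T) :
    bsimple σ p β ∈ (PointedCone.hull ℚ S).lineal :=
  ⟨PointedCone.subset_hull (hS ⟨β, hβ, Or.inl rfl⟩),
    PointedCone.subset_hull (hS ⟨β, hβ, Or.inr rfl⟩)⟩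

theorem hvec_mem_of_hsimple_mem (hT : tilde σ T = T) {C : PointedCone ℚ (B → ℚ)}
    (hb : ∀ τ ∈ T, bsimple σ p τ ∈ C.lineal) (hh : ∀ τ ∉ T, hsimple σ p τ ∈ C)
    (hper : β ∈ Function.periodicPts σ) (horb : sameOrbit σ β β') (hβ : β ∉ T) (hβ' : β' ∉ T) :
    hvec σ p β β' ∈ C := by
  have hsteps := inv_pow_steps_apply hper horb
  rw [hvec_eq_hpow_steps hsteps]
  exact hpow_mem_of_hsimple_mem hT hb hh hβ (hsteps.symm ▸ hβ')

theorem hsimple_mem_of_hvec_mem (hT : tilde σ T = T) {C : PointedCone ℚ (B → ℚ)}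
    (hb : ∀ τ ∈ T, bsimple σ p τ ∈ C.lineal)
    (hh : ∀ τ, τ ∉ T → sameOrbit σ β τ → hvec σ p β τ ∈ C)
    (hper : β ∈ Function.periodicPts σ) (hβ : β ∉ T) : hsimple σ p β ∈ C := by
  obtain ⟨n, hn⟩ := exists_isLeast_returnTimes hper hβ
  have hsteps := steps_inv_pow_apply_of_isLeast hn
  have hmem := hh _ hn.1.2 (sameOrbit_inv_pow_apply hper n)
  rw [hvec_eq_hpow_steps (by rw [hsteps]), hsteps] at hmem
  exact (hpow_mem_iff_hsimple_mem hT hb hβ hn).1 hmem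

end Generators

end GO

theorem statement1_general {B : Type*} [DecidableEq B]
    (σ : Equiv.Perm B) (hσ : ∀ β, β ∈ Function.periodicPts σ) (p : ℕ) (T : Set B)
    (hT : GO.tilde σ T = T) :
    GO.D σ p T =
      GO.cone ({v : B → ℚ | ∃ β, β ∉ T ∧ v = GO.hsimple σ p β}
        ∪ {v : B → ℚ | ∃ β ∈ T, v = GO.bsimple σ p β ∨ v = -(GO.bsimple σ p β)}) := by
  rw [GO.D, GO.cone_eq_hull, GO.cone_eq_hull, SetLike.coe_set_eq]
  apply le_antisymm <;> refine Submodule.span_le.2 (Set.union_subset ?_ ?_)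
  · rintro _ ⟨β, β', hβ, hβ', horb, rfl⟩
    rw [GO.Tscr_eq_compl hT] at hβ'
    exact GO.hvec_mem_of_hsimple_mem hT
      (fun τ => GO.bsimple_mem_lineal_hull Set.subset_union_right)
      (fun τ hτ => PointedCone.subset_hull (Or.inl ⟨τ, hτ, rfl⟩)) (hσ β) horb hβ hβ'
  · exact Set.subset_union_right.trans PointedCone.subset_hull
  · rintro _ ⟨β, hβ, rfl⟩
    refine GO.hsimple_mem_of_hvec_mem hT
      (fun τ => GO.bsimple_mem_lineal_hull Set.subset_union_right)
      (fun τ hτ horb => PointedCone.subset_hull (Or.inl ⟨β, τ, hβ, ?_, horb, rfl⟩)) (hσ β) hβ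
    rwa [GO.Tscr_eq_compl hT]
  · exact Set.subset_union_right.trans PointedCone.subset_hull

/-- If `T̃ = T`, then `𝒟_T` equals the `ℚ^{≥0}`-cone generated by
`{h_β : β ∈ 𝔹 − T} ∪ {b_β, −b_β : β ∈ T}`. -/
theorem statement1 {B : Type*} [Fintype B] [DecidableEq B] [Nonempty B]
    (σ : Equiv.Perm B) (p : ℕ) (hp : p.Prime) (T : Set B)
    (hT : GO.tilde σ T = T) :
    GO.D σ p T =
      GO.cone ({v : B → ℚ | ∃ β, β ∉ T ∧ v = GO.hsimple σ p β}
        ∪ {v : B → ℚ | ∃ β ∈ T, v = GO.bsimple σ p β ∨ v = -(GO.bsimple σ p β)}) :=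
  statement1_general σ (fun β => σ.injective.mem_periodicPts β) p T hT
end

section
/- For every T ⊆ 𝔹, the family {g_β : β ∈ 𝔹} is a basis of the ℚ-vector space ℚ^𝔹. -/
/- Setting: `B` is the finite nonempty set 𝔹 equipped with a permutation `σ` (Frobenius),
and `p` is a prime.  Weights live in `ℚ^𝔹 = (B → ℚ)`.  The orbits `𝔹_𝔭` of `σ` are the sets
`orbit σ β`, and for `T ⊆ 𝔹` we have `T_𝔭 = T ∩ orbit σ β`. -/

open scoped Classical

/-!
It suffices that a linear functional `f` killing every `g_β` kills every `e_β`. Put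
`a β = |f (e_β)|`. Off `T`, the relation `f (g_β) = 0` says that either `a β = 0` or
`a (σ^{n_β} β) = p ^ n_β * a β` with `σ^{n_β} β` again off `T`; so the maximum of `a` off `T` is
zero. On `T` it says that `a β = p * a (σ⁻¹ β)`, so a nonzero value of `a` on `T` is never the
least nonzero value. As `a` vanishes off `T`, it has no least nonzero value, hence vanishes.
-/

theorem not_of_forall_exists_lt {ι α : Type*} [Finite ι] [Preorder α] {P : ι → Prop} (u : ι → α)
    (h : ∀ i, P i → ∃ j, P j ∧ u i < u j) (i : ι) : ¬ P i := by
  intro hi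
  obtain ⟨j, hj, hmax⟩ := (Set.toFinite {i | P i}).exists_maximalFor u _ ⟨i, hi⟩
  obtain ⟨k, hk, hjk⟩ := h j hj
  exact hjk.not_ge (hmax hk hjk.le)

theorem span_range_eq_top_of_forall_dual {ι K V : Type*} [Field K] [AddCommGroup V] [Module K V]
    {v : ι → V} (h : ∀ f : Module.Dual K V, (∀ i, f (v i) = 0) → f = 0) :
    Submodule.span K (Set.range v) = ⊤ := by
  refine Submodule.dualAnnihilator_eq_bot_iff.mp ((Submodule.eq_bot_iff _).mpr fun f hf ↦ ?_)
  rw [Submodule.mem_dualAnnihilator] at hf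
  exact h f fun i ↦ hf _ (Submodule.subset_span (Set.mem_range_self i))

namespace GO

section Orbits

variable {B : Type*} {σ : Equiv.Perm B} {T : Set B} {β : B}

theorem exists_pos_pow_apply_notMem [Finite B] (h : ¬ orbit σ β ⊆ T) :
    ∃ i, 0 < i ∧ (σ ^ i) β ∉ T := by
  obtain ⟨_, ⟨m, rfl⟩, hm⟩ := Set.not_subset.mp h
  exact ⟨m + orderOf σ, Nat.add_pos_right m (orderOf_pos σ),
    by rwa [pow_add, pow_orderOf_eq_one, mul_one]⟩

theorem nn_pos [Finite B] (h : ¬ orbit σ β ⊆ tilde σ T) : 0 < nn σ T β :=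
  (Nat.sInf_mem (exists_pos_pow_apply_notMem h)).1

theorem sigbar_notMem_tilde [Finite B] (h : ¬ orbit σ β ⊆ tilde σ T) :
    sigbar σ T β ∉ tilde σ T :=
  (Nat.sInf_mem (exists_pos_pow_apply_notMem h)).2

theorem subset_tilde (σ : Equiv.Perm B) (T : Set B) : T ⊆ tilde σ T :=
  Set.subset_union_left

end Orbits

section Functionals

variable {B : Type*} [DecidableEq B] {σ : Equiv.Perm B} {p : ℕ} {T : Set B} {β : B}
  {f : Module.Dual ℚ (B → ℚ)}

theorem e_eq_single (β : B) : e β = Pi.single β 1 := by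
  funext τ
  simp only [e, Pi.single_apply]

theorem dual_eq_zero_of_forall_e [Finite B] (h : ∀ β, f (e β) = 0) : f = 0 := by
  refine (Pi.basisFun ℚ B).ext fun β ↦ ?_
  rw [Pi.basisFun_apply, ← e_eq_single, h, LinearMap.zero_apply]

theorem apply_e_of_mem (hβ : β ∈ T) (hf : f (gvec σ p T β) = 0) :
    f (e β) = -(p * f (e (σ⁻¹ β))) := by
  rw [gvec, if_pos hβ, bsimple, map_add, map_smul, smul_eq_mul] at hf
  exact eq_neg_of_add_eq_zero_left hf

theorem apply_e_eq_zero_of_orbit_subset (hβ : β ∉ T) (horbit : orbit σ β ⊆ tilde σ T)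
    (hf : f (gvec σ p T β) = 0) : f (e β) = 0 := by
  rwa [gvec, if_neg hβ, if_pos horbit, map_neg, neg_eq_zero] at hf

theorem abs_apply_e_sigbar (hβ : β ∉ T) (horbit : ¬ orbit σ β ⊆ tilde σ T)
    (hf : f (gvec σ p T β) = 0) :
    |f (e (sigbar σ T β))| = (p : ℚ) ^ nn σ T β * |f (e β)| := by
  suffices |f (e (sigbar σ T β))| = |(p : ℚ) ^ nn σ T β * f (e β)| by
    rwa [abs_mul, abs_pow, Nat.abs_cast] at this
  rw [gvec, if_neg hβ, if_neg horbit] at hf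
  refine abs_eq_abs.mpr ?_
  split_ifs at hf
  · rw [map_neg, neg_eq_zero, fB, map_add, map_smul, smul_eq_mul] at hf
    exact Or.inr (eq_neg_of_add_eq_zero_left hf)
  · rw [fH, map_add, map_neg, map_smul, smul_eq_mul] at hf
    exact Or.inl (neg_add_eq_zero.mp hf)

theorem apply_e_eq_zero_of_notMem [Finite B] (hp : 1 < p) (hf : ∀ β, f (gvec σ p T β) = 0)
    (hβ : β ∉ T) : f (e β) = 0 := by
  suffices h : ¬ (β ∉ T ∧ f (e β) ≠ 0) from by_contra fun hne ↦ h ⟨hβ, hne⟩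
  refine not_of_forall_exists_lt (P := fun τ ↦ τ ∉ T ∧ f (e τ) ≠ 0) (fun τ ↦ |f (e τ)|) ?_ β
  rintro τ ⟨hτ, hne⟩
  have horbit : ¬ orbit σ τ ⊆ tilde σ T :=
    fun h ↦ hne (apply_e_eq_zero_of_orbit_subset hτ h (hf τ))
  have hlt : |f (e τ)| < |f (e (sigbar σ T τ))| := by
    rw [abs_apply_e_sigbar hτ horbit (hf τ)]
    exact lt_mul_of_one_lt_left (abs_pos.mpr hne)
      (one_lt_pow₀ (Nat.one_lt_cast.mpr hp) (nn_pos horbit).ne')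
  exact ⟨sigbar σ T τ, ⟨fun h ↦ sigbar_notMem_tilde horbit (subset_tilde σ T h),
    abs_pos.mp ((abs_nonneg _).trans_lt hlt)⟩, hlt⟩

theorem apply_e_eq_zero [Finite B] (hp : 1 < p) (hf : ∀ β, f (gvec σ p T β) = 0) (β : B) :
    f (e β) = 0 := by
  refine not_not.mp (not_of_forall_exists_lt (P := fun τ ↦ f (e τ) ≠ 0)
    (fun τ ↦ OrderDual.toDual |f (e τ)|) (fun τ hτ ↦ ?_) β)
  have hmem : τ ∈ T := by_contra fun h ↦ hτ (apply_e_eq_zero_of_notMem hp hf h)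
  have hrec : f (e τ) = -(p * f (e (σ⁻¹ τ))) := apply_e_of_mem hmem (hf τ)
  have hpred : f (e (σ⁻¹ τ)) ≠ 0 := fun h ↦ hτ (by rw [hrec, h, mul_zero, neg_zero])
  refine ⟨σ⁻¹ τ, hpred, OrderDual.toDual_lt_toDual.mpr ?_⟩
  rw [hrec, abs_neg, abs_mul, Nat.abs_cast]
  exact lt_mul_of_one_lt_left (abs_pos.mpr hpred) (Nat.one_lt_cast.mpr hp)

end Functionals

end GO

theorem statement3_general {B : Type*} [Finite B] [DecidableEq B]
    (σ : Equiv.Perm B) {p : ℕ} (hp : 1 < p) (T : Set B) :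
    LinearIndependent ℚ (GO.gvec σ p T) ∧
    Submodule.span ℚ (Set.range (GO.gvec σ p T)) = ⊤ := by
  have := Fintype.ofFinite B
  have hspan : Submodule.span ℚ (Set.range (GO.gvec σ p T)) = ⊤ :=
    span_range_eq_top_of_forall_dual fun _ hf ↦
      GO.dual_eq_zero_of_forall_e (GO.apply_e_eq_zero hp hf)
  exact ⟨linearIndependent_of_top_le_span_of_card_eq_finrank hspan.ge
    (Module.finrank_fintype_fun_eq_card ℚ).symm, hspan⟩

/-- For every `T ⊆ 𝔹`, the family `{g_β : β ∈ 𝔹}` is a basis of `ℚ^𝔹`. -/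
theorem statement3 {B : Type*} [Fintype B] [DecidableEq B] [Nonempty B]
    (σ : Equiv.Perm B) (p : ℕ) (hp : p.Prime) (T : Set B) :
    LinearIndependent ℚ (GO.gvec σ p T) ∧
    Submodule.span ℚ (Set.range (GO.gvec σ p T)) = ⊤ :=
  statement3_general σ hp.one_lt T
end
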